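/- Let p be a prime, let L be a field of characteristic p with algebraic closure L̄, let α, β ∈ L, and let d ≥ 2 be an integer. For λ ∈ L̄ let f_λ(x) = x^d + λ. Then the set of λ ∈ L̄ such that both α and β (viewed in L̄) are preperiodic under f_λ is infinite if and only if at least one of the following holds: (1) both α and β are algebraic over the prime field 𝔽_p; (2) d = p^ℓ for some positive integer ℓ and β − α is algebraic over 𝔽_p; (3) α^d = β^d. -/

import Mathlib

/-!
Let `a` be transcendental over the finite field `k`, and suppose that there are infinitely many
common parameters, that is, `c` for which `a` and `b` are both preperiodic under `f_c`.
If `d = p ^ l`, the `n`-th iterates of `a` and `b` differ by `(a - b) ^ (d ^ n)`, so `b - a` is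
algebraic. Otherwise `d = p ^ l * e` with `2 ≤ e` prime to `p`. Consider a place `v` of `K` over `k`
with `1 < v a`. Along the orbits of `a` and `b` the absolute value is constantly `v a`, and
`x ^ d - y ^ d` has absolute value at most `v a` for all `x`, `y` in these orbits, so `x` is close
to `s * y` for some `e`-th root of unity `s`. For a root of unity `t` either some common parameter
`c` brings `f_c(a)` close to `t * b`, or none does. In the latter case some monic polynomial is
small at all common parameters, while the orbit polynomials of `a` stay bounded at all their Galois
conjugates. A large finite set of common parameters, stable under the automorphisms that fix `a` and
`b`, would then have a discriminant whose norm down to `k(a)` is a nonzero element of `k[a]` with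
absolute value less than `1`, which is absurd. Hence every `t` is approached, and comparing the
corresponding parameters shows that `v (a ^ d - b ^ d) ≤ 1`, strictly if `3 ≤ d`. So `a ^ d - b ^ d`
has no poles, is algebraic over `k`, and for `3 ≤ d` it is zero. For `d = 2`, if the constant
`a ^ 2 - b ^ 2` were not zero, then for every common parameter the sum of the second or of the third
iterates of `a` and `b` would be one of `0, 1, -1`, leaving only finitely many parameters.

In the other direction, a transcendental `a` has any prescribed prime period for a suitable `c`,
because the parameter `a - a ^ d` that makes `a` a fixed point is a simple root of the equation
`f_c^n(a) = a` in `c`.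
-/

open Polynomial

section Preperiodic

variable {X Y : Type*} {f : X → X} {x : X}

/-- The point `x` is preperiodic under `f`: its forward orbit repeats a value. -/
def Preperiodic (f : X → X) (x : X) : Prop :=
  ∃ m n : ℕ, m < n ∧ f^[m] x = f^[n] x

lemma preperiodic_iff_finite_range_iterate :
    Preperiodic f x ↔ (Set.range fun n => f^[n] x).Finite := by
  constructor
  · rintro ⟨m, n, hmn, h⟩
    refine ((Finset.range n).finite_toSet.image fun j => f^[j] x).subset ?_
    rintro _ ⟨j, rfl⟩
    induction j using Nat.strong_induction_on with
    | _ j ih =>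
      rcases lt_or_ge j n with hj | hj
      · exact ⟨j, by simpa using hj, rfl⟩
      · obtain ⟨i, rfl⟩ := Nat.exists_eq_add_of_le' hj
        have hcycle : f^[i + n] x = f^[i + m] x := by
          rw [Function.iterate_add_apply, ← h, ← Function.iterate_add_apply]
        simpa only [hcycle] using ih (i + m) (by lia)
  · intro hfin
    obtain ⟨m, n, hmn, hne⟩ := Function.not_injective_iff.1
      fun hinj => Set.infinite_range_of_injective hinj hfin
    rcases lt_or_gt_of_ne hne with hlt | hlt
    · exact ⟨m, n, hlt, hmn⟩
    · exact ⟨n, m, hlt, hmn.symm⟩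

lemma preperiodic_of_mapsTo {s : Set X} (hs : s.Finite) (hf : Set.MapsTo f s s) (hx : x ∈ s) :
    Preperiodic f x :=
  preperiodic_iff_finite_range_iterate.2 <| hs.subset <| by
    rintro _ ⟨n, rfl⟩
    exact hf.iterate n hx

lemma preperiodic_apply_iff : Preperiodic f (f x) ↔ Preperiodic f x := by
  constructor
  · rintro ⟨m, n, hmn, h⟩
    exact ⟨m + 1, n + 1, by lia, h⟩
  · rintro ⟨m, n, hmn, h⟩
    refine ⟨m, n, hmn, ?_⟩
    rw [← Function.iterate_succ_apply, ← Function.iterate_succ_apply,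
      Function.iterate_succ_apply', h, ← Function.iterate_succ_apply' f n x]

lemma Preperiodic.iterate (h : Preperiodic f x) (n : ℕ) : Preperiodic f (f^[n] x) := by
  induction n with
  | zero => exact h
  | succ n ih => rwa [Function.iterate_succ_apply', preperiodic_apply_iff]

lemma preperiodic_apply_iff_of_semiconj {f' : Y → Y} {g : X → Y} (hg : Function.Semiconj g f f')
    (hinj : Function.Injective g) : Preperiodic f' (g x) ↔ Preperiodic f x := by
  simp only [Preperiodic, ← (hg.iterate_right _).eq, hinj.eq_iff]

end Preperiodic

section Unicritical

variable {R R' : Type*} [CommRing R] [CommRing R'] {d : ℕ}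

/-- The unicritical polynomial map `f_c : x ↦ x ^ d + c`. -/
def unicritical (d : ℕ) (c x : R) : R := x ^ d + c

lemma unicritical_sub_unicritical (d : ℕ) (c x y : R) :
    unicritical d c x - unicritical d c y = x ^ d - y ^ d :=
  add_sub_add_right_eq_sub _ _ _

lemma semiconj_unicritical (φ : R →+* R') (d : ℕ) (c : R) :
    Function.Semiconj φ (unicritical d c) (unicritical d (φ c)) := fun x => by
  simp only [unicritical, map_add, map_pow]

lemma preperiodic_unicritical_map_iff {φ : R →+* R'} (hφ : Function.Injective φ) {c x : R} :
    Preperiodic (unicritical d (φ c)) (φ x) ↔ Preperiodic (unicritical d c) x :=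
  preperiodic_apply_iff_of_semiconj (semiconj_unicritical φ d c) hφ

/-- The `n`-th iterate of `f_c` at a given point `x`, as a polynomial in the parameter `c`. -/
noncomputable def orbitPoly (d : ℕ) (x : R) (n : ℕ) : R[X] :=
  (unicritical d X)^[n] (C x)

lemma orbitPoly_succ (d : ℕ) (x : R) (n : ℕ) :
    orbitPoly d x (n + 1) = orbitPoly d x n ^ d + X :=
  Function.iterate_succ_apply' _ _ _

lemma eval_orbitPoly (d : ℕ) (c x : R) (n : ℕ) :
    (orbitPoly d x n).eval c = (unicritical d c)^[n] x := by
  have h := (semiconj_unicritical (evalRingHom c) d X).iterate_right n (C x)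
  simpa only [orbitPoly, coe_evalRingHom, eval_X, eval_C] using h

lemma orbitPoly_one (d : ℕ) (x : R) : orbitPoly d x 1 = X + C (x ^ d) := by
  rw [orbitPoly_succ, add_comm, C_pow]
  rfl

lemma monic_and_natDegree_orbitPoly [Nontrivial R] (hd : 2 ≤ d) (x : R) (n : ℕ) :
    (orbitPoly d x (n + 1)).Monic ∧ (orbitPoly d x (n + 1)).natDegree = d ^ n := by
  induction n with
  | zero =>
    rw [zero_add, orbitPoly_one, pow_zero]
    exact ⟨monic_X_add_C _, natDegree_X_add_C _⟩
  | succ n ih =>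
    obtain ⟨hmonic, hdeg⟩ := ih
    have hpow : (orbitPoly d x (n + 1) ^ d).natDegree = d ^ (n + 1) := by
      rw [hmonic.natDegree_pow, hdeg, pow_succ']
    have hlt : (X : R[X]).degree < (orbitPoly d x (n + 1) ^ d).degree := by
      refine degree_lt_degree ?_
      rw [hpow, natDegree_X]
      exact Nat.one_lt_pow (by lia) hd
    rw [orbitPoly_succ _ _ (n + 1)]
    exact ⟨(hmonic.pow d).add_of_left hlt,
      (natDegree_add_eq_left_of_degree_lt hlt).trans hpow⟩

lemma monic_orbitPoly [Nontrivial R] (hd : 2 ≤ d) (x : R) (n : ℕ) :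
    (orbitPoly d x (n + 1)).Monic :=
  (monic_and_natDegree_orbitPoly hd x n).1

lemma natDegree_orbitPoly [Nontrivial R] (hd : 2 ≤ d) (x : R) (n : ℕ) :
    (orbitPoly d x (n + 1)).natDegree = d ^ n :=
  (monic_and_natDegree_orbitPoly hd x n).2

end Unicritical

section Valuation

variable {K Γ₀ : Type*} [CommRing K] [LinearOrderedCommGroupWithZero Γ₀] (v : Valuation K Γ₀)
  {d : ℕ} {c x y z : K}

lemma valuation_eq_one_of_pow_eq_one (hd : d ≠ 0) (hx : x ^ d = 1) : v x = 1 :=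
  (pow_eq_one_iff_of_nonneg zero_le hd).1 (by rw [← map_pow, hx, map_one])

lemma valuation_unicritical_of_lt (h : v c < v x ^ d) : v (unicritical d c x) = v x ^ d := by
  rw [unicritical, v.map_add_eq_of_lt_left (by rwa [map_pow]), map_pow]

lemma not_preperiodic_of_escape (hd : 2 ≤ d) (hx : 1 < v x) (hc : v c < v x ^ d) :
    ¬ Preperiodic (unicritical d c) x := by
  have hgrow : ∀ z, 1 < v z → v c < v z ^ d → v z < v (unicritical d c z) := fun z hz hcz => by
    rw [valuation_unicritical_of_lt v hcz]
    exact lt_self_pow₀ hz (by lia)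
  have hescape : ∀ n, 1 < v ((unicritical d c)^[n] x) ∧ v c < v ((unicritical d c)^[n] x) ^ d := by
    intro n
    induction n with
    | zero => exact ⟨hx, hc⟩
    | succ n ih =>
      rw [Function.iterate_succ_apply']
      have hlt := hgrow _ ih.1 ih.2
      exact ⟨ih.1.trans hlt, ih.2.trans (pow_lt_pow_left₀ hlt zero_le (by lia))⟩
  have hmono : StrictMono fun n => v ((unicritical d c)^[n] x) :=
    strictMono_nat_of_lt_succ fun n => by
      rw [Function.iterate_succ_apply']
      exact hgrow _ (hescape n).1 (hescape n).2
  rintro ⟨m, n, hmn, h⟩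
  exact hmn.ne (hmono.injective (congrArg v h))

namespace Preperiodic

lemma valuation_pow_eq (hd : 2 ≤ d) (hc : 1 < v c) (h : Preperiodic (unicritical d c) x) :
    v x ^ d = v c := by
  have hle : ∀ z, Preperiodic (unicritical d c) z → v z ^ d ≤ v c := fun z hz => by
    by_contra! hlt
    exact not_preperiodic_of_escape v hd ((one_lt_pow_iff_of_nonneg zero_le (by lia)).1
      (hc.trans hlt)) hlt hz
  refine (hle x h).antisymm (not_lt.1 fun hlt => ?_)
  have hfx := hle _ (preperiodic_apply_iff.2 h)
  rw [unicritical, v.map_add_eq_of_lt_right (by rwa [map_pow])] at hfx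
  exact hfx.not_gt (lt_self_pow₀ hc (by lia))

lemma valuation_le_one (hd : 2 ≤ d) (hc : v c ≤ 1) (h : Preperiodic (unicritical d c) x) :
    v x ≤ 1 := by
  by_contra! hx
  exact not_preperiodic_of_escape v hd hx (hc.trans_lt (one_lt_pow₀ hx (by lia))) h

lemma valuation_param_le_one (hd : 2 ≤ d) (hx : v x ≤ 1) (h : Preperiodic (unicritical d c) x) :
    v c ≤ 1 := by
  by_contra! hc
  exact hc.not_ge (h.valuation_pow_eq v hd hc ▸ pow_le_one₀ zero_le hx)

lemma valuation_iterate_eq (hd : 2 ≤ d) (hx : 1 < v x) (hpx : Preperiodic (unicritical d c) x)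
    (hpy : Preperiodic (unicritical d c) y) (n : ℕ) : v ((unicritical d c)^[n] y) = v x := by
  have hc : 1 < v c := not_le.1 fun hc => hx.not_ge (hpx.valuation_le_one v hd hc)
  rw [← pow_left_inj₀ zero_le zero_le (show d ≠ 0 by lia), hpx.valuation_pow_eq v hd hc,
    (hpy.iterate n).valuation_pow_eq v hd hc]

lemma valuation_iterate_le_one (hd : 2 ≤ d) (hx : v x ≤ 1)
    (hpx : Preperiodic (unicritical d c) x) (hpy : Preperiodic (unicritical d c) y) (n : ℕ) :
    v ((unicritical d c)^[n] y) ≤ 1 :=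
  (hpy.iterate n).valuation_le_one v hd (hpx.valuation_param_le_one v hd hx)

lemma valuation_iterate_sub_iterate_le (hd : 2 ≤ d) (hx : 1 < v x)
    (hpx : Preperiodic (unicritical d c) x) (hpy : Preperiodic (unicritical d c) y)
    (hpz : Preperiodic (unicritical d c) z) (m n : ℕ) :
    v ((unicritical d c)^[m] y - (unicritical d c)^[n] z) ≤ v x :=
  v.map_sub_le (hpx.valuation_iterate_eq v hd hx hpy m).le
    (hpx.valuation_iterate_eq v hd hx hpz n).le

lemma valuation_pow_sub_pow_le (hd : 2 ≤ d) (hx : 1 < v x)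
    (hpx : Preperiodic (unicritical d c) x) (hpy : Preperiodic (unicritical d c) y)
    (hpz : Preperiodic (unicritical d c) z) : v (y ^ d - z ^ d) ≤ v x := by
  rw [← unicritical_sub_unicritical d c]
  exact hpx.valuation_iterate_sub_iterate_le v hd hx hpy hpz 1 1

end Preperiodic

end Valuation

section Integrality

variable {A K : Type*} [CommRing A] [Field K] [Algebra A K]

lemma isIntegral_of_forall_valuation_le_one {z : K}
    (h : ∀ V : ValuationSubring K, (∀ a, IsIntegral A a → V.valuation a ≤ 1) →
      V.valuation z ≤ 1) : IsIntegral A z := by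
  by_contra hz
  have hz' : z ∉ (integralClosure A K).toSubring := hz
  have : IsIntegrallyClosedIn (integralClosure A K).toSubring K :=
    inferInstanceAs (IsIntegrallyClosedIn (integralClosure A K) K)
  obtain ⟨V, hle, hzV⟩ := Subring.exists_le_valuationSubring_of_isIntegrallyClosedIn hz'
  exact hzV ((V.valuation_le_one_iff z).1
    (h V fun a ha => (V.valuation_le_one_iff a).2 (hle ha)))

lemma isAlgebraic_of_forall_valuation_le_one {k : Type*} [Field k] [Algebra k K] {z : K}
    (h : ∀ V : ValuationSubring K, V.valuation.IsTrivialOn k → V.valuation z ≤ 1) :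
    IsAlgebraic k z :=
  (isIntegral_of_forall_valuation_le_one fun V hV => h V <|
    .of_le_one _ fun _ => hV _ isIntegral_algebraMap).isAlgebraic

lemma valuation_eq_one_of_isAlgebraic {k Γ₀ : Type*} [Field k] [Algebra k K]
    [LinearOrderedCommGroupWithZero Γ₀] (v : Valuation K Γ₀) [v.IsTrivialOn k] {z : K}
    (hz : IsAlgebraic k z) (h0 : z ≠ 0) : v z = 1 :=
  by_contra fun h => v.transcendental_of_ne_one k z h0 h hz

variable {d : ℕ} {c x y : K}

lemma Preperiodic.isIntegral_param (hd : 2 ≤ d) (hx : IsIntegral A x)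
    (h : Preperiodic (unicritical d c) x) : IsIntegral A c :=
  isIntegral_of_forall_valuation_le_one fun V hV =>
    h.valuation_param_le_one V.valuation hd (hV x hx)

lemma Preperiodic.isIntegral (hd : 2 ≤ d) (hc : IsIntegral A c)
    (h : Preperiodic (unicritical d c) x) : IsIntegral A x :=
  isIntegral_of_forall_valuation_le_one fun V hV => h.valuation_le_one V.valuation hd (hV c hc)

end Integrality

section Roots

variable {K Γ₀ : Type*} [Field K] [LinearOrderedCommGroupWithZero Γ₀]
  {v : Valuation K Γ₀} {d e p l : ℕ} {s t w x y z ζ : K}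

/-- `z` is bounded by `1` at `v`, strictly so if `3 ≤ d`. This is how close `x` comes to some
`s * y` with `s ^ e = 1` when `v (x ^ d - y ^ d) ≤ v y` and `d = p ^ l * e`. -/
def IsSmall (v : Valuation K Γ₀) (d : ℕ) (z : K) : Prop :=
  v z ≤ 1 ∧ (3 ≤ d → v z < 1)

lemma IsSmall.sub (hw : IsSmall v d w) (hz : IsSmall v d z) : IsSmall v d (w - z) :=
  ⟨v.map_sub_le hw.1 hz.1, fun hd => v.map_sub_lt (hw.2 hd) (hz.2 hd)⟩

lemma isAlgebraic_of_mem_nthRootsFinset (k : Type*) [Field k] [Algebra k K] (he : 0 < e)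
    (hs : s ∈ nthRootsFinset e (1 : K)) : IsAlgebraic k s :=
  .of_pow he (by rw [(mem_nthRootsFinset he _).1 hs]; exact isAlgebraic_one)

lemma eq_zero_of_forall_sub_mem_nthRootsFinset (he : 2 ≤ e) (hζ : IsPrimitiveRoot ζ e)
    (h : ∀ s ∈ nthRootsFinset e (1 : K), s - z ∈ nthRootsFinset e (1 : K)) : z = 0 := by
  classical
  have himage : (nthRootsFinset e (1 : K)).image (· - z) = nthRootsFinset e (1 : K) :=
    Finset.eq_of_subset_of_card_le (Finset.image_subset_iff.2 h)
      (Finset.card_image_of_injective _ sub_left_injective).ge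
  have hsum : ∑ s ∈ nthRootsFinset e (1 : K), s
      = ∑ s ∈ nthRootsFinset e (1 : K), (s - z) := by
    conv_lhs => rw [← himage]
    exact Finset.sum_image sub_left_injective.injOn
  rw [Finset.sum_sub_distrib, Finset.sum_const, hζ.card_nthRootsFinset, nsmul_eq_mul,
    eq_comm, sub_eq_self] at hsum
  have : NeZero e := ⟨by lia⟩
  exact (mul_eq_zero.1 hsum).resolve_left hζ.neZero'.ne

lemma pow_sub_pow_eq_prod_sub_root_mul [ExpChar K p] (he : 0 < e) (hζ : IsPrimitiveRoot ζ e) :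
    x ^ (p ^ l * e) - y ^ (p ^ l * e) =
      (∏ s ∈ nthRootsFinset e (1 : K), (x - s * y)) ^ p ^ l := by
  rw [← hζ.pow_sub_pow_eq_prod_sub_mul x y he, sub_pow_expChar_pow, ← pow_mul, ← pow_mul,
    mul_comm]

lemma exists_valuation_sub_root_mul_lt [ExpChar K p] (he : 0 < e) (hζ : IsPrimitiveRoot ζ e)
    (h : v (x ^ (p ^ l * e) - y ^ (p ^ l * e)) < v y ^ (p ^ l * e)) :
    ∃ s ∈ nthRootsFinset e (1 : K), v (x - s * y) < v y := by
  by_contra! hge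
  refine h.not_ge ?_
  rw [pow_sub_pow_eq_prod_sub_root_mul he hζ, map_pow, map_prod, mul_comm, pow_mul]
  gcongr
  calc v y ^ e = ∏ _s ∈ nthRootsFinset e (1 : K), v y := by
        rw [Finset.prod_const, hζ.card_nthRootsFinset]
    _ ≤ _ := Finset.prod_le_prod' hge

lemma valuation_sub_eq_one_of_mem_nthRootsFinset
    (k : Type*) [Field k] [Algebra k K] [v.IsTrivialOn k] (he : 0 < e)
    (hs : s ∈ nthRootsFinset e (1 : K)) (ht : t ∈ nthRootsFinset e (1 : K)) (hst : s ≠ t) :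
    v (s - t) = 1 :=
  valuation_eq_one_of_isAlgebraic (k := k) v
    ((isAlgebraic_of_mem_nthRootsFinset k he hs).sub (isAlgebraic_of_mem_nthRootsFinset k he ht))
    (sub_ne_zero.2 hst)

lemma valuation_sub_root_mul_eq (k : Type*) [Field k] [Algebra k K] [v.IsTrivialOn k]
    (he : 0 < e) (hs : s ∈ nthRootsFinset e (1 : K)) (ht : t ∈ nthRootsFinset e (1 : K))
    (hst : s ≠ t) (h : v (x - s * y) < v y) : v (x - t * y) = v y := by
  have hsy : v ((s - t) * y) = v y := by
    rw [map_mul, valuation_sub_eq_one_of_mem_nthRootsFinset k he hs ht hst, one_mul]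
  rw [show x - t * y = (x - s * y) + (s - t) * y by ring,
    v.map_add_eq_of_lt_right (h.trans_eq hsy.symm), hsy]

lemma exists_isSmall_sub_root_mul_of_le (k : Type*) [Field k] [Algebra k K] [v.IsTrivialOn k]
    [ExpChar K p] (he : 2 ≤ e) (hζ : IsPrimitiveRoot ζ e) (hy : 1 < v y)
    (h : v (x ^ (p ^ l * e) - y ^ (p ^ l * e)) ≤ v y) :
    ∃ s ∈ nthRootsFinset e (1 : K), IsSmall v (p ^ l * e) (x - s * y) := by
  classical
  have hq : 0 < p ^ l := expChar_pow_pos K p l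
  obtain ⟨s, hs, hlt⟩ := exists_valuation_sub_root_mul_lt (by lia) hζ
    (h.trans_lt (lt_self_pow₀ hy (by nlinarith)))
  have hfactor : ∀ t ∈ (nthRootsFinset e (1 : K)).erase s, v (x - t * y) = v y := fun t ht =>
    valuation_sub_root_mul_eq k (by lia) hs (Finset.mem_of_mem_erase ht)
      (Finset.ne_of_mem_erase ht).symm hlt
  have hprod : v (x - s * y) ^ p ^ l * v y ^ ((e - 1) * p ^ l) ≤ v y := by
    rwa [pow_sub_pow_eq_prod_sub_root_mul (by lia) hζ, map_pow, map_prod,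
      ← Finset.mul_prod_erase _ _ hs, Finset.prod_congr rfl hfactor, Finset.prod_const,
      Finset.card_erase_of_mem hs, hζ.card_nthRootsFinset, mul_pow, ← pow_mul] at h
  obtain ⟨n, hn⟩ : ∃ n, (e - 1) * p ^ l = n + 1 :=
    Nat.exists_eq_succ_of_ne_zero (mul_pos (by lia) hq).ne'
  have hle : v (x - s * y) ^ p ^ l * v y ^ n ≤ 1 := by
    rwa [hn, pow_succ, ← mul_assoc, mul_le_iff_le_one_left (zero_lt_one.trans hy)] at hprod
  refine ⟨s, hs, ?_, fun hd => ?_⟩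
  · exact (pow_le_one_iff_of_nonneg zero_le hq.ne').1
      ((le_mul_of_one_le_right' (one_le_pow₀ hy.le)).trans hle)
  · have hn0 : n ≠ 0 := by
      rintro rfl
      have hq1 : p ^ l = 1 := Nat.eq_one_of_mul_eq_one_left hn
      rw [hq1] at hd hn
      lia
    by_contra! hge
    exact hle.not_gt (one_lt_mul_of_le_of_lt (one_le_pow₀ hge) (one_lt_pow₀ hy hn0))

end Roots

section CommonParameters

variable {K Γ₀ : Type*} [Field K] [LinearOrderedCommGroupWithZero Γ₀] {v : Valuation K Γ₀}
  {e p l : ℕ} {a b c x y ζ : K}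

lemma Preperiodic.exists_isSmall_sub_root_mul (k : Type*) [Field k] [Algebra k K]
    [v.IsTrivialOn k] [ExpChar K p] (he : 2 ≤ e) (hζ : IsPrimitiveRoot ζ e) (hy : 1 < v y)
    (hpx : Preperiodic (unicritical (p ^ l * e) c) x)
    (hpy : Preperiodic (unicritical (p ^ l * e) c) y) :
    ∃ s ∈ nthRootsFinset e (1 : K), IsSmall v (p ^ l * e) (x - s * y) := by
  have hd : 2 ≤ p ^ l * e := by nlinarith [expChar_pow_pos K p l]
  exact exists_isSmall_sub_root_mul_of_le k he hζ hy (hpy.valuation_pow_sub_pow_le v hd hy hpx hpy)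

/-- The parameters `c` for which both `a` and `b` are preperiodic under `x ↦ x ^ d + c`. -/
def commonParams (d : ℕ) (a b : K) : Set K :=
  {c | Preperiodic (unicritical d c) a ∧ Preperiodic (unicritical d c) b}

lemma commonParams_comm (d : ℕ) (a b : K) : commonParams d a b = commonParams d b a :=
  Set.ext fun _ => and_comm

lemma isSmall_pow_sub_pow_of_forall_root (k : Type*) [Field k] [Algebra k K]
    [v.IsTrivialOn k] [ExpChar K p] (he : 2 ≤ e) (hζ : IsPrimitiveRoot ζ e) (hb : 1 < v b)
    (h : ∀ t ∈ nthRootsFinset e (1 : K), ∃ c ∈ commonParams (p ^ l * e) a b,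
      IsSmall v (p ^ l * e) (unicritical (p ^ l * e) c a - t * b)) :
    IsSmall v (p ^ l * e) (a ^ (p ^ l * e) - b ^ (p ^ l * e)) := by
  have hpair : ∀ t ∈ nthRootsFinset e (1 : K), ∃ u ∈ nthRootsFinset e (1 : K),
      IsSmall v (p ^ l * e) (a ^ (p ^ l * e) - b ^ (p ^ l * e) - (t - u) * b) := by
    intro t ht
    obtain ⟨c, hc, hsmall⟩ := h t ht
    obtain ⟨u, hu, hsmall'⟩ := Preperiodic.exists_isSmall_sub_root_mul (v := v) k he hζ hb
      (preperiodic_apply_iff.2 hc.2) hc.2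
    refine ⟨u, hu, ?_⟩
    convert hsmall.sub hsmall' using 1
    simp only [unicritical]
    ring
  choose! u hu hsmall using hpair
  have h1 : (1 : K) ∈ nthRootsFinset e (1 : K) := one_mem_nthRootsFinset (by lia)
  have hconst : ∀ t ∈ nthRootsFinset e (1 : K), t - u t = 1 - u 1 := by
    intro t ht
    by_contra hne
    have halg : IsAlgebraic k (t - u t - (1 - u 1)) := by
      have hroot : ∀ s ∈ nthRootsFinset e (1 : K), IsAlgebraic k s := fun s hs =>
        isAlgebraic_of_mem_nthRootsFinset k (by lia) hs
      exact ((hroot t ht).sub (hroot _ (hu t ht))).sub ((hroot 1 h1).sub (hroot _ (hu 1 h1)))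
    have hle := ((hsmall 1 h1).sub (hsmall t ht)).1
    rw [sub_sub_sub_cancel_left, ← sub_mul, map_mul,
      valuation_eq_one_of_isAlgebraic v halg (sub_ne_zero.2 hne), one_mul] at hle
    exact hle.not_gt hb
  have hzero : 1 - u 1 = 0 := eq_zero_of_forall_sub_mem_nthRootsFinset he hζ fun t ht => by
    rw [← hconst t ht, sub_sub_cancel]
    exact hu t ht
  simpa only [hzero, zero_mul, sub_zero] using hsmall 1 h1

lemma isSmall_pow_sub_pow_or_exists_root (k : Type*) [Field k] [Algebra k K]
    [v.IsTrivialOn k] [ExpChar K p] (he : 2 ≤ e) (hζ : IsPrimitiveRoot ζ e) (hb : 1 < v b) :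
    IsSmall v (p ^ l * e) (a ^ (p ^ l * e) - b ^ (p ^ l * e)) ∨
      ∃ t ∈ nthRootsFinset e (1 : K), ∀ c ∈ commonParams (p ^ l * e) a b,
        v (unicritical (p ^ l * e) c a - t * b) = v b := by
  refine or_iff_not_imp_right.2 fun hmiss =>
    isSmall_pow_sub_pow_of_forall_root k he hζ hb fun t ht => ?_
  by_contra! hnot
  refine hmiss ⟨t, ht, fun c hc => ?_⟩
  obtain ⟨s, hs, hsmall⟩ := Preperiodic.exists_isSmall_sub_root_mul (v := v) k he hζ hb
    (preperiodic_apply_iff.2 hc.1) hc.2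
  refine valuation_sub_root_mul_eq k (by lia) hs ht ?_ (hsmall.1.trans_lt hb)
  rintro rfl
  exact hnot c hc hsmall

end CommonParameters

section MissedDisc

variable {K Γ₀ : Type*} [Field K] [LinearOrderedCommGroupWithZero Γ₀] {v : Valuation K Γ₀}
  {d : ℕ} {a b c s t x ζ : K}

lemma exists_mem_roots_valuation_sub_lt {P : K[X]} (hP : P.Splits) (hmonic : P.Monic) {g : Γ₀}
    (h : v (P.eval x) < g ^ P.natDegree) : ∃ r ∈ P.roots, v (x - r) < g := by
  by_contra! hge
  refine h.not_ge ?_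
  rw [hP.eval_eq_prod_roots_of_monic hmonic, map_multiset_prod, Multiset.map_map,
    hP.natDegree_eq_card_roots, ← Multiset.card_map (v ∘ fun r => x - r)]
  refine Multiset.pow_card_le_prod ?_
  simpa only [Multiset.mem_map, forall_exists_index, and_imp, forall_apply_eq_imp_iff₂]

lemma exists_unicritical_iterate_two_eq_mul [IsAlgClosed K] (hd : 2 ≤ d) (hb : 1 < v b)
    (hs : s ^ d = 1) (ht : t ^ d = 1) (hab : v (a ^ d - b ^ d) ≤ v b) :
    ∃ r, (unicritical d r)^[2] a = s * b ∧ v (t * b - a ^ d - r) < v b := by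
  have hroot : ∀ u : K, u ^ d = 1 → v u = 1 := fun u => valuation_eq_one_of_pow_eq_one v (by lia)
  set P := orbitPoly d a 2 - C (s * b)
  have hPdeg : P.natDegree = d := by
    rw [natDegree_sub_C, natDegree_orbitPoly hd, pow_one]
  have hPmonic : P.Monic := (monic_orbitPoly hd a 1).sub_of_left <| by
    refine degree_C_le.trans_lt (natDegree_pos_iff_degree_pos.1 ?_)
    rw [natDegree_orbitPoly hd]
    positivity
  have hval : v (P.eval (t * b - a ^ d)) ≤ v b := by
    have heval : P.eval (t * b - a ^ d) = (t - s) * b - (a ^ d - b ^ d) := by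
      simp only [P, eval_sub, eval_C, eval_orbitPoly, Function.iterate_succ, Function.comp_apply,
        Function.iterate_zero_apply, unicritical, add_sub_cancel, mul_pow, ht]
      ring
    rw [heval]
    refine v.map_sub_le ?_ hab
    rw [map_mul]
    exact mul_le_of_le_one_left' (v.map_sub_le (hroot t ht).le (hroot s hs).le)
  obtain ⟨r, hr, hlt⟩ := exists_mem_roots_valuation_sub_lt (IsAlgClosed.splits P) hPmonic
    (hval.trans_lt (lt_self_pow₀ hb (hPdeg.symm ▸ hd)))
  refine ⟨r, ?_, hlt⟩
  simpa only [P, IsRoot, eval_sub, eval_C, eval_orbitPoly, sub_eq_zero] using isRoot_of_mem_roots hr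

lemma exists_orbitPoly_pow_sub_eq_mul {r₁ r₂ : K} (hd : 2 ≤ d) (h : r₁ ≠ r₂)
    (h₁ : ((unicritical d r₁)^[2] a) ^ d = b ^ d) (h₂ : ((unicritical d r₂)^[2] a) ^ d = b ^ d) :
    ∃ G : K[X], G.Monic ∧ G.natDegree ≠ 0 ∧
      orbitPoly d a 2 ^ d - C (b ^ d) = (X - C r₁) * (X - C r₂) * G := by
  have hpow := (monic_orbitPoly hd a 1).pow d
  have hdeg : (orbitPoly d a 2 ^ d).natDegree = d * d := by
    rw [(monic_orbitPoly hd a 1).natDegree_pow, natDegree_orbitPoly hd, pow_one]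
  have hmonic : (orbitPoly d a 2 ^ d - C (b ^ d)).Monic := hpow.sub_of_left <| by
    refine degree_C_le.trans_lt (natDegree_pos_iff_degree_pos.1 ?_)
    rw [hdeg]
    positivity
  have hdvd : ∀ r, ((unicritical d r)^[2] a) ^ d = b ^ d →
      X - C r ∣ orbitPoly d a 2 ^ d - C (b ^ d) := fun r hr => by
    rw [dvd_iff_isRoot, IsRoot, eval_sub, eval_pow, eval_C, eval_orbitPoly, hr, sub_self]
  obtain ⟨G, hG⟩ := (isCoprime_X_sub_C_of_isUnit_sub (sub_ne_zero.2 h).isUnit).mul_dvd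
    (hdvd r₁ h₁) (hdvd r₂ h₂)
  have hquad : ((X - C r₁) * (X - C r₂)).Monic := (monic_X_sub_C r₁).mul (monic_X_sub_C r₂)
  have hGmonic : G.Monic := hquad.of_mul_monic_left (hG ▸ hmonic)
  refine ⟨G, hGmonic, fun hG0 => ?_, hG⟩
  have := congrArg natDegree hG
  rw [natDegree_sub_C, hdeg, hquad.natDegree_mul hGmonic, hG0,
    (monic_X_sub_C r₁).natDegree_mul (monic_X_sub_C r₂), natDegree_X_sub_C,
    natDegree_X_sub_C] at this
  nlinarith

lemma exists_monic_valuation_eval_mul_le_one [IsAlgClosed K] (hd : 2 ≤ d) (hb : 1 < v b)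
    (hζ : ζ ^ d = 1) (hζ1 : ζ ≠ 1) (ht : t ^ d = 1) (hne : (commonParams d a b).Nonempty)
    (hmiss : ∀ c ∈ commonParams d a b, v (unicritical d c a - t * b) = v b) :
    ∃ G : K[X], G.Monic ∧ G.natDegree ≠ 0 ∧
      ∀ c ∈ commonParams d a b, v (G.eval c) * v b ≤ 1 := by
  have hab : v (a ^ d - b ^ d) ≤ v b := by
    obtain ⟨c, hca, hcb⟩ := hne
    exact hcb.valuation_pow_sub_pow_le v hd hb hca hcb
  obtain ⟨r₁, hr₁, hlt₁⟩ :=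
    exists_unicritical_iterate_two_eq_mul (s := 1) hd hb (one_pow d) ht hab
  obtain ⟨r₂, hr₂, hlt₂⟩ := exists_unicritical_iterate_two_eq_mul hd hb hζ ht hab
  have hr : r₁ ≠ r₂ := by
    rintro rfl
    have hb0 : b ≠ 0 := v.ne_zero_iff.1 (zero_lt_one.trans hb).ne'
    exact hζ1 (mul_right_cancel₀ hb0 (hr₂.symm.trans hr₁))
  obtain ⟨G, hmonic, hdeg, hG⟩ := exists_orbitPoly_pow_sub_eq_mul (b := b) hd hr
    (by rw [hr₁, one_mul]) (by rw [hr₂, mul_pow, hζ, one_mul])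
  refine ⟨G, hmonic, hdeg, fun c hc => ?_⟩
  have hdist : ∀ r, v (t * b - a ^ d - r) < v b → v (c - r) = v b := fun r hr => by
    rw [show c - r = (unicritical d c a - t * b) + (t * b - a ^ d - r) by
      rw [unicritical]; ring, v.map_add_eq_of_lt_left (hr.trans_eq (hmiss c hc).symm), hmiss c hc]
  have hval : v ((c - r₁) * (c - r₂) * G.eval c) ≤ v b := by
    have heval := congrArg (eval c) hG
    simp only [eval_sub, eval_pow, eval_C, eval_orbitPoly, eval_mul, eval_X] at heval
    rw [← heval]
    exact hc.2.valuation_pow_sub_pow_le v hd hb (hc.1.iterate 2) hc.2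
  rw [map_mul, map_mul, hdist r₁ hlt₁, hdist r₂ hlt₂, mul_assoc,
    mul_le_iff_le_one_right (zero_lt_one.trans hb), mul_comm] at hval
  exact hval

end MissedDisc

section GaloisConjugates

variable {F Ω : Type*} [Field F] [Field Ω] [Algebra F Ω]

lemma exists_pow_mem_range_algebraMap [Normal F Ω] {z : Ω} (h : ∀ σ : Ω ≃ₐ[F] Ω, σ z = z) :
    ∃ n ≠ 0, z ^ n ∈ (algebraMap F Ω).range := by
  have hz : IsIntegral F z := Normal.isIntegral inferInstance z
  have hsplits : ((minpoly F z).map (algebraMap F Ω)).Splits := Normal.splits inferInstance z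
  have hroots : ∀ r ∈ ((minpoly F z).map (algebraMap F Ω)).roots, r = z := fun r hr => by
    obtain ⟨σ, rfl⟩ := minpoly.exists_algEquiv_of_root' hz.isAlgebraic
      (by simpa only [IsRoot, eval_map_algebraMap] using isRoot_of_mem_roots hr)
    exact h σ
  have heval := hsplits.eval_eq_prod_roots_of_monic ((minpoly.monic hz).map _) 0
  rw [Multiset.eq_replicate_card.2 hroots, Multiset.map_replicate, Multiset.prod_replicate,
    ← hsplits.natDegree_eq_card_roots, natDegree_map, zero_sub] at heval
  refine ⟨_, (minpoly.natDegree_pos hz).ne', ?_⟩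
  have hpow : z ^ (minpoly F z).natDegree
      = (-1) ^ (minpoly F z).natDegree * (-z) ^ (minpoly F z).natDegree := by
    rw [← neg_pow, neg_neg]
  rw [hpow, ← heval, ← coeff_zero_eq_eval_zero, coeff_map]
  exact mul_mem (pow_mem (neg_mem (one_mem _)) _) ⟨_, rfl⟩

lemma exists_finset_subset_forall_algEquiv_mem [Algebra.IsAlgebraic F Ω] {S : Set Ω}
    (hS : S.Infinite) (N : ℕ) : ∃ O : Finset Ω, ↑O ⊆ S ∧ N ≤ O.card ∧
      ∀ σ : Ω ≃ₐ[F] Ω, (∀ x ∈ S, σ x ∈ S) → ∀ x ∈ O, σ x ∈ O := by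
  classical
  obtain ⟨t, htS, rfl⟩ := hS.exists_subset_card_eq N
  refine ⟨{y ∈ t.biUnion fun x => ((minpoly F x).rootSet Ω).toFinset | y ∈ S}, ?_, ?_, ?_⟩
  · intro y hy
    exact (Finset.mem_filter.1 hy).2
  · refine Finset.card_le_card fun x hx => Finset.mem_filter.2 ⟨?_, htS hx⟩
    refine Finset.mem_biUnion.2 ⟨x, hx, Set.mem_toFinset.2 ?_⟩
    exact (mem_rootSet_of_ne (minpoly.ne_zero (Algebra.IsIntegral.isIntegral x))).2
      (minpoly.aeval F x)
  · intro σ hσ y hy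
    simp only [Finset.mem_filter, Finset.mem_biUnion, Set.mem_toFinset] at hy ⊢
    obtain ⟨⟨x, hx, hyx⟩, hyS⟩ := hy
    refine ⟨⟨x, hx, mem_rootSet.2 ⟨(mem_rootSet.1 hyx).1, ?_⟩⟩, hσ y hyS⟩
    rw [aeval_algHom_apply, aeval_eq_zero_of_mem_rootSet hyx, map_zero]

variable {A Γ₀ : Type*} [CommRing A] [IsIntegrallyClosed A] [Algebra A F]
  [IsFractionRing A F] [Algebra A Ω] [IsScalarTower A F Ω] [Normal F Ω]
  [LinearOrderedCommGroupWithZero Γ₀] {v : Valuation Ω Γ₀} {b z δ : Ω}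

lemma one_le_valuation_of_forall_algEquiv_eq (hv : ∀ a : A, a ≠ 0 → 1 ≤ v (algebraMap A Ω a))
    (hz : z ≠ 0) (hint : IsIntegral A z) (h : ∀ σ : Ω ≃ₐ[F] Ω, σ z = z) : 1 ≤ v z := by
  obtain ⟨n, hn, f, hf⟩ := exists_pow_mem_range_algebraMap h
  have hfint : IsIntegral A f := by
    rw [← isIntegral_algebraMap_iff (algebraMap F Ω).injective, hf]
    exact hint.pow n
  obtain ⟨a, rfl⟩ := IsIntegrallyClosed.isIntegral_iff.1 hfint
  rw [← IsScalarTower.algebraMap_apply] at hf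
  have ha : a ≠ 0 := by
    rintro rfl
    exact pow_ne_zero n hz (by rw [← hf, map_zero])
  have hpow := hv a ha
  rwa [hf, map_pow, one_le_pow_iff_of_nonneg zero_le hn] at hpow

lemma one_le_prod_valuation_rootSet_minpoly (hv : ∀ a : A, a ≠ 0 → 1 ≤ v (algebraMap A Ω a))
    (hz : z ≠ 0) (hint : IsIntegral A z) :
    1 ≤ ∏ r ∈ ((minpoly F z).rootSet Ω).toFinset, v r := by
  classical
  have hconj : ∀ r ∈ ((minpoly F z).rootSet Ω).toFinset, ∃ σ : Ω ≃ₐ[F] Ω, σ z = r := fun r hr =>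
    minpoly.exists_algEquiv_of_root' hint.tower_top.isAlgebraic
      (aeval_eq_zero_of_mem_rootSet (Set.mem_toFinset.1 hr))
  rw [← map_prod]
  refine one_le_valuation_of_forall_algEquiv_eq (F := F) hv ?_ ?_ fun σ => ?_
  · refine Finset.prod_ne_zero_iff.2 fun r hr => ?_
    obtain ⟨σ, rfl⟩ := hconj r hr
    exact (map_ne_zero σ).2 hz
  · refine IsIntegral.prod _ fun r hr => ?_
    obtain ⟨σ, rfl⟩ := hconj r hr
    exact hint.map (σ.toAlgHom.restrictScalars A)
  · rw [map_prod]
    refine Finset.prod_equiv σ.toEquiv (fun r => ?_) fun r _ => rfl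
    simp only [Set.mem_toFinset, mem_rootSet, AlgEquiv.toEquiv_eq_coe, EquivLike.coe_coe,
      aeval_algHom_apply, map_eq_zero_iff σ σ.injective]

lemma card_rootSet_minpoly_le (hb : IsIntegral F b) (hδ : IsIntegral F δ)
    (hfix : ∀ σ : Ω ≃ₐ[F] Ω, σ b = b → σ δ = δ) :
    ((minpoly F δ).rootSet Ω).toFinset.card ≤ (minpoly F b).natDegree := by
  classical
  have hconj : ∀ r ∈ ((minpoly F δ).rootSet Ω).toFinset, ∃ σ : Ω ≃ₐ[F] Ω, σ δ = r := fun r hr =>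
    minpoly.exists_algEquiv_of_root' hδ.isAlgebraic
      (aeval_eq_zero_of_mem_rootSet (Set.mem_toFinset.1 hr))
  choose! τ hτ using hconj
  calc ((minpoly F δ).rootSet Ω).toFinset.card
      ≤ ((minpoly F b).rootSet Ω).toFinset.card := by
        refine Finset.card_le_card_of_injOn (fun r => τ r b) (fun r _ => ?_) fun r hr s hs h => ?_
        · refine Set.mem_toFinset.2 (mem_rootSet.2 ⟨minpoly.ne_zero hb, ?_⟩)
          rw [aeval_algHom_apply, minpoly.aeval, map_zero]
        · have hfixδ := hfix ((τ r).trans (τ s).symm) <| by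
            rw [AlgEquiv.trans_apply, AlgEquiv.symm_apply_eq]
            exact h
          rwa [AlgEquiv.trans_apply, AlgEquiv.symm_apply_eq, hτ r hr, hτ s hs] at hfixδ
    _ ≤ (minpoly F b).natDegree := by
        rw [← Set.ncard_eq_toFinset_card']
        exact ncard_rootSet_le _ _

lemma one_le_valuation_mul_pow_natDegree_minpoly
    (hv : ∀ a : A, a ≠ 0 → 1 ≤ v (algebraMap A Ω a)) (hδ : δ ≠ 0) (hint : IsIntegral A δ)
    (hb : IsIntegral F b) (hfix : ∀ σ : Ω ≃ₐ[F] Ω, σ b = b → σ δ = δ) {M : Γ₀} (hM : 1 ≤ M)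
    (hle : ∀ σ : Ω ≃ₐ[F] Ω, v (σ δ) ≤ M) : 1 ≤ v δ * M ^ (minpoly F b).natDegree := by
  classical
  have hδF : IsIntegral F δ := hint.tower_top
  have hmem : δ ∈ ((minpoly F δ).rootSet Ω).toFinset := Set.mem_toFinset.2 <|
    mem_rootSet.2 ⟨minpoly.ne_zero hδF, minpoly.aeval F δ⟩
  calc (1 : Γ₀) ≤ ∏ r ∈ ((minpoly F δ).rootSet Ω).toFinset, v r :=
        one_le_prod_valuation_rootSet_minpoly hv hδ hint
    _ = v δ * ∏ r ∈ ((minpoly F δ).rootSet Ω).toFinset.erase δ, v r :=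
        (Finset.mul_prod_erase _ _ hmem).symm
    _ ≤ v δ * M ^ (((minpoly F δ).rootSet Ω).toFinset.erase δ).card := by
        refine mul_le_mul_right (Finset.prod_le_pow_card _ _ _ fun r hr => ?_) _
        obtain ⟨σ, rfl⟩ := minpoly.exists_algEquiv_of_root' hδF.isAlgebraic
          (aeval_eq_zero_of_mem_rootSet (Set.mem_toFinset.1 (Finset.mem_of_mem_erase hr)))
        exact hle σ
    _ ≤ v δ * M ^ (minpoly F b).natDegree := by
        gcongr
        exact (Finset.card_le_card (Finset.erase_subset _ _)).trans
          (card_rootSet_minpoly_le hb hδF hfix)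

end GaloisConjugates

section Fekete

variable {K Γ₀ : Type*} [Field K] [DecidableEq K] [LinearOrderedCommGroupWithZero Γ₀]

/-- The product of the differences `x - y` over all ordered pairs of distinct elements of `S`,
which is up to sign the discriminant of the polynomial with root set `S`. -/
def diffProd (S : Finset K) : K :=
  ∏ x ∈ S, ∏ y ∈ S.erase x, (x - y)

lemma diffProd_ne_zero (S : Finset K) : diffProd S ≠ 0 :=
  Finset.prod_ne_zero_iff.2 fun _ _ => Finset.prod_ne_zero_iff.2 fun _ hy =>
    sub_ne_zero.2 (Finset.ne_of_mem_erase hy).symm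

lemma isIntegral_diffProd {A : Type*} [CommRing A] [Algebra A K] {S : Finset K}
    (h : ∀ x ∈ S, IsIntegral A x) : IsIntegral A (diffProd S) :=
  .prod _ fun x hx => .prod _ fun y hy => (h x hx).sub (h y (Finset.mem_of_mem_erase hy))

lemma diffProd_image {E K' : Type*} [Field K'] [DecidableEq K'] [FunLike E K K']
    [RingHomClass E K K'] (φ : E) (S : Finset K) : diffProd (S.image φ) = φ (diffProd S) := by
  have hφ : Function.Injective φ := (φ : K →+* K').injective
  simp only [diffProd, map_prod, map_sub, Finset.prod_image hφ.injOn, ← Finset.image_erase hφ]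

lemma valuation_det_le {ι R : Type*} [Fintype ι] [DecidableEq ι] [CommRing R]
    (v : Valuation R Γ₀) {M : Matrix ι ι R} {g : ι → Γ₀} (h : ∀ i j, v (M i j) ≤ g j) :
    v M.det ≤ ∏ j, g j := by
  rw [Matrix.det_apply']
  refine v.map_sum_le fun σ _ => ?_
  have hsign : v ((Equiv.Perm.sign σ : ℤ) : R) ≤ 1 := by
    rcases Int.units_eq_one_or (Equiv.Perm.sign σ) with hσ | hσ <;> simp [hσ]
  rw [map_mul, map_prod]
  exact (mul_le_of_le_one_left' hsign).trans (Finset.prod_le_prod' fun i _ => h _ _)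

variable (v : Valuation K Γ₀)

lemma valuation_diffProd_image_univ {n : ℕ} {w : Fin n → K} (hw : Function.Injective w) :
    v (diffProd (Finset.univ.image w)) = v (Matrix.vandermonde w).det ^ 2 := by
  have hoff : diffProd (Finset.univ.image w) = ∏ i, ∏ j ∈ {i}ᶜ, (w i - w j) := by
    simp only [diffProd, Finset.prod_image hw.injOn, ← Finset.image_erase hw,
      Finset.compl_singleton]
  rw [hoff, ← Finset.prod_prod_Ioi_mul_eq_prod_prod_off_diag fun j i => w i - w j,
    Matrix.det_vandermonde]
  simp only [map_prod, map_mul, ← Finset.prod_pow]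
  refine Finset.prod_congr rfl fun i _ => Finset.prod_congr rfl fun j _ => ?_
  rw [v.map_sub_swap (w i), sq]

/- Column operations replace the powers `x ^ k` in the Vandermonde matrix of `S` by the monic
polynomials `G ^ (k / D) * (X - c) ^ (k % D)`, where `D` is the degree of `G`. -/
lemma valuation_diffProd_le {S : Finset K} {G : K[X]} (hG : G.Monic) {c : K} {g r : Γ₀}
    (hg : ∀ x ∈ S, v (G.eval x) ≤ g) (hr : ∀ x ∈ S, v (x - c) ≤ r) :
    v (diffProd S) ≤ (g ^ (∑ k ∈ Finset.range S.card, k / G.natDegree) *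
      r ^ (∑ k ∈ Finset.range S.card, k % G.natDegree)) ^ 2 := by
  let w : Fin S.card → K := fun i => S.equivFin.symm i
  have hwS : ∀ i, w i ∈ S := fun i => (S.equivFin.symm i).2
  have hw : Function.Injective w := Subtype.val_injective.comp S.equivFin.symm.injective
  have himage : Finset.univ.image w = S := Finset.eq_of_subset_of_card_le
    (Finset.image_subset_iff.2 fun i _ => hwS i)
    (by rw [Finset.card_image_of_injective _ hw, Finset.card_fin])
  let P : Fin S.card → K[X] := fun j => G ^ (j / G.natDegree) * (X - C c) ^ (j % G.natDegree)
  have hmonic : ∀ j, (P j).Monic := fun j => (hG.pow _).mul ((monic_X_sub_C c).pow _)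
  have hdeg : ∀ j, (P j).natDegree = j := fun j => by
    rw [(hG.pow _).natDegree_mul ((monic_X_sub_C c).pow _), hG.natDegree_pow,
      (monic_X_sub_C c).natDegree_pow, natDegree_X_sub_C, mul_one, Nat.div_add_mod']
  conv_lhs => rw [← himage, valuation_diffProd_image_univ v hw,
    Matrix.det_eval_matrixOfPolynomials_eq_det_vandermonde w P hdeg hmonic]
  gcongr
  refine (valuation_det_le v fun i j => ?_).trans_eq
    (b := ∏ j : Fin S.card, g ^ (j / G.natDegree) * r ^ (j % G.natDegree)) ?_
  · simp only [Matrix.of_apply, P, eval_mul, eval_pow, eval_sub, eval_X, eval_C, map_mul, map_pow]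
    gcongr
    · exact hg _ (hwS i)
    · exact hr _ (hwS i)
  · rw [Finset.prod_mul_distrib, Finset.prod_pow_eq_pow_sum, Finset.prod_pow_eq_pow_sum,
      Finset.sum_range, Finset.sum_range]

lemma mul_sum_range_div_add_sum_range_mod (n N : ℕ) :
    n * ∑ k ∈ Finset.range N, k / n + ∑ k ∈ Finset.range N, k % n = ∑ k ∈ Finset.range N, k := by
  rw [Finset.mul_sum, ← Finset.sum_add_distrib]
  exact Finset.sum_congr rfl fun k _ => Nat.div_add_mod k n

lemma sum_range_mod_le {n : ℕ} (hn : 0 < n) (N : ℕ) : ∑ k ∈ Finset.range N, k % n ≤ N * n := by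
  simpa only [Finset.card_range, smul_eq_mul] using
    Finset.sum_le_card_nsmul (Finset.range N) (· % n) n fun k _ => (Nat.mod_lt k hn).le

/- The two sums of quotients grow like `N ^ 2 / (2 * D)` and `N ^ 2 / (2 * D')`, the sums of
remainders only linearly in `N`. -/
lemma exists_forall_sum_range_div_mod_lt {m D D' : ℕ} (hD' : 0 < D') (hD : m * D' < D) :
    ∃ N₀, ∀ N ≥ N₀,
      m * (∑ k ∈ Finset.range N, k / D + ∑ k ∈ Finset.range N, k % D)
        + ∑ k ∈ Finset.range N, k % D' < ∑ k ∈ Finset.range N, k / D' := by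
  set B := m * D' * D * D + D * D' * D' + D * D' with hB
  refine ⟨2 * B + 2, fun N hN => ?_⟩
  have hdivD := mul_sum_range_div_add_sum_range_mod D N
  have hdivD' := mul_sum_range_div_add_sum_range_mod D' N
  have hmodD := sum_range_mod_le (show 0 < D by lia) N
  have hmodD' := sum_range_mod_le hD' N
  have hT : N * B < ∑ k ∈ Finset.range N, k := by
    have hgauss := Finset.sum_range_id_mul_two N
    have hlt : N * (2 * B) < N * (N - 1) := Nat.mul_lt_mul_of_pos_left (by lia) (by lia)
    lia
  set T := ∑ k ∈ Finset.range N, k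
  set q := ∑ k ∈ Finset.range N, k / D
  set r := ∑ k ∈ Finset.range N, k % D
  set q' := ∑ k ∈ Finset.range N, k / D'
  set r' := ∑ k ∈ Finset.range N, k % D'
  refine lt_of_mul_lt_mul_left (a := D * D')
    (lt_of_add_lt_add_right (a := D * r') ?_) (Nat.zero_le _)
  calc D * D' * (m * (q + r) + r') + D * r'
      = m * D' * (D * q) + m * D' * D * r + D * D' * r' + D * r' := by ring
    _ ≤ m * D' * T + m * D' * D * (N * D) + D * D' * (N * D') + D * (N * D') := by
        gcongr
        lia
    _ = m * D' * T + N * B := by rw [hB]; ring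
    _ < m * D' * T + T := by gcongr
    _ = (m * D' + 1) * T := by ring
    _ ≤ D * T := by gcongr; exact hD
    _ = D * D' * q' + D * r' := by rw [← hdivD']; ring

end Fekete

section Finiteness

variable {F Ω A Γ₀ : Type*} [Field F] [Field Ω] [Algebra F Ω] [CommRing A]
  [IsIntegrallyClosed A] [Algebra A F] [IsFractionRing A F] [Algebra A Ω] [IsScalarTower A F Ω]
  [Normal F Ω] [LinearOrderedCommGroupWithZero Γ₀] {v : Valuation Ω Γ₀} {b c : Ω} {R : Γ₀}
  {S : Set Ω} {G P : Polynomial Ω}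

lemma card_lt_of_forall_algEquiv_mem (hv : ∀ a : A, a ≠ 0 → 1 ≤ v (algebraMap A Ω a))
    (hb : IsIntegral F b) (hR : 1 < R) (hG : G.Monic) (hP : P.Monic) {N₀ : ℕ}
    (hN₀ : ∀ N ≥ N₀, (minpoly F b).natDegree *
      (∑ k ∈ Finset.range N, k / P.natDegree + ∑ k ∈ Finset.range N, k % P.natDegree)
        + ∑ k ∈ Finset.range N, k % G.natDegree < ∑ k ∈ Finset.range N, k / G.natDegree)
    {O : Finset Ω} (hO : ∀ σ : Ω ≃ₐ[F] Ω, σ b = b → ∀ z ∈ O, σ z ∈ O)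
    (hint : ∀ z ∈ O, IsIntegral A z) (hc : ∀ z ∈ O, ∀ σ : Ω ≃ₐ[F] Ω, v (σ z - c) ≤ R)
    (hGR : ∀ z ∈ O, v (G.eval z) * R ≤ 1)
    (hPR : ∀ z ∈ O, ∀ σ : Ω ≃ₐ[F] Ω, v (P.eval (σ z)) ≤ R) : O.card < N₀ := by
  classical
  by_contra! hcard
  set q := ∑ k ∈ Finset.range O.card, k / P.natDegree
  set r := ∑ k ∈ Finset.range O.card, k % P.natDegree
  set q' := ∑ k ∈ Finset.range O.card, k / G.natDegree
  set r' := ∑ k ∈ Finset.range O.card, k % G.natDegree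
  set m := (minpoly F b).natDegree
  have hR0 : 0 < R := zero_lt_one.trans hR
  have hfix : ∀ σ : Ω ≃ₐ[F] Ω, σ b = b → σ (diffProd O) = diffProd O := fun σ hσ => by
    rw [← diffProd_image, Finset.eq_of_subset_of_card_le (Finset.image_subset_iff.2 (hO σ hσ))
      (Finset.card_image_of_injective _ σ.injective).ge]
  have hconj : ∀ σ : Ω ≃ₐ[F] Ω, v (σ (diffProd O)) ≤ (R ^ (q + r)) ^ 2 := fun σ => by
    have hle := valuation_diffProd_le v (S := O.image σ) (c := c) (g := R) (r := R) hP
      (Finset.forall_mem_image.2 fun z hz => hPR z hz σ)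
      (Finset.forall_mem_image.2 fun z hz => hc z hz σ)
    rwa [diffProd_image, Finset.card_image_of_injective _ σ.injective, ← pow_add] at hle
  have hsmall : v (diffProd O) ≤ (R⁻¹ ^ q' * R ^ r') ^ 2 := valuation_diffProd_le v hG
    (fun z hz => (le_mul_inv_iff₀ hR0).2 (hGR z hz) |>.trans_eq (one_mul _))
    (fun z hz => hc z hz .refl)
  have hge := one_le_valuation_mul_pow_natDegree_minpoly hv (diffProd_ne_zero O)
    (isIntegral_diffProd hint) hb hfix (one_le_pow₀ (one_le_pow₀ hR.le)) hconj
  have hlt : R ^ (m * (q + r) + r') < R ^ q' := pow_lt_pow_right₀ hR (hN₀ _ hcard)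
  refine hge.not_gt ((mul_le_mul_left hsmall _).trans_lt ?_)
  rw [pow_right_comm, ← mul_pow, inv_pow]
  refine pow_lt_one₀ zero_le ?_ two_ne_zero
  rwa [mul_assoc, inv_mul_lt_iff₀ (pow_pos hR0 _), mul_one, ← pow_mul, ← pow_add, mul_comm _ m,
    add_comm]

theorem finite_of_forall_algEquiv_mem (hv : ∀ a : A, a ≠ 0 → 1 ≤ v (algebraMap A Ω a))
    (hb : IsIntegral F b) (hR : 1 < R) (hS : ∀ σ : Ω ≃ₐ[F] Ω, σ b = b → ∀ z ∈ S, σ z ∈ S)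
    (hint : ∀ z ∈ S, IsIntegral A z) (hc : ∀ z ∈ S, ∀ σ : Ω ≃ₐ[F] Ω, v (σ z - c) ≤ R)
    (hG : G.Monic) (hdeg : G.natDegree ≠ 0) (hGR : ∀ z ∈ S, v (G.eval z) * R ≤ 1)
    (hP : ∀ n, ∃ P : Polynomial Ω, P.Monic ∧ n < P.natDegree ∧
      ∀ z ∈ S, ∀ σ : Ω ≃ₐ[F] Ω, v (P.eval (σ z)) ≤ R) : S.Finite := by
  by_contra hinf
  obtain ⟨P, hPmonic, hPdeg, hPR⟩ := hP ((minpoly F b).natDegree * G.natDegree)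
  obtain ⟨N₀, hN₀⟩ := exists_forall_sum_range_div_mod_lt hdeg.bot_lt hPdeg
  obtain ⟨O, hOS, hcard, hO⟩ := exists_finset_subset_forall_algEquiv_mem (F := F) hinf N₀
  exact hcard.not_gt <| card_lt_of_forall_algEquiv_mem hv hb hR hG hPmonic hN₀
    (fun σ hσ => hO σ (hS σ hσ)) (fun z hz => hint z (hOS hz)) (fun z hz => hc z (hOS hz))
    (fun z hz => hGR z (hOS hz)) (fun z hz => hPR z (hOS hz))

end Finiteness

section CommonParametersFinite

variable {Ω A Γ₀ : Type*} [Field Ω] [CommRing A] [IsIntegrallyClosed A] [Algebra A Ω]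
  [LinearOrderedCommGroupWithZero Γ₀] {v : Valuation Ω Γ₀} {d e l p : ℕ} {a : A} {b t ζ : Ω}

theorem finite_commonParams_of_forall_valuation_eq (F : Type*) [Field F] [Algebra F Ω]
    [Algebra A F] [IsFractionRing A F] [IsScalarTower A F Ω] [Normal F Ω] [IsAlgClosed Ω]
    (hv : ∀ x : A, x ≠ 0 → 1 ≤ v (algebraMap A Ω x)) (hd : 2 ≤ d) (ha : 1 < v (algebraMap A Ω a))
    (hζ : ζ ^ d = 1) (hζ1 : ζ ≠ 1) (ht : t ^ d = 1)
    (hmiss : ∀ c ∈ commonParams d (algebraMap A Ω a) b,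
      v (unicritical d c (algebraMap A Ω a) - t * b) = v b) :
    (commonParams d (algebraMap A Ω a) b).Finite := by
  obtain hempty | hne := (commonParams d (algebraMap A Ω a) b).eq_empty_or_nonempty
  · exact hempty ▸ Set.finite_empty
  have hint : ∀ c ∈ commonParams d (algebraMap A Ω a) b, IsIntegral A c := fun c hc =>
    hc.1.isIntegral_param hd isIntegral_algebraMap
  have hfix : ∀ σ : Ω ≃ₐ[F] Ω, σ (algebraMap A Ω a) = algebraMap A Ω a := fun σ =>
    (σ.toAlgHom.restrictScalars A).commutes a
  have hmap : ∀ (σ : Ω ≃ₐ[F] Ω) {c x : Ω}, Preperiodic (unicritical d c) x →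
      Preperiodic (unicritical d (σ c)) (σ x) := fun σ _ _ =>
    (preperiodic_unicritical_map_iff (φ := (σ : Ω →+* Ω)) σ.injective).2
  have hconj : ∀ c ∈ commonParams d (algebraMap A Ω a) b, ∀ σ : Ω ≃ₐ[F] Ω,
      Preperiodic (unicritical d (σ c)) (algebraMap A Ω a) := fun c hc σ => by
    simpa only [hfix] using hmap σ hc.1
  obtain ⟨c₀, hc₀⟩ := hne
  have hb : IsIntegral A b := hc₀.2.isIntegral hd (hint c₀ hc₀)
  have hab : v b = v (algebraMap A Ω a) := hc₀.1.valuation_iterate_eq v hd ha hc₀.2 0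
  obtain ⟨G, hG, hdeg, hGle⟩ := exists_monic_valuation_eval_mul_le_one hd (hab ▸ ha) hζ hζ1 ht
    ⟨c₀, hc₀⟩ hmiss
  refine finite_of_forall_algEquiv_mem (c := -algebraMap A Ω a ^ d) hv hb.tower_top ha
    (fun σ hσ c hc => ⟨hconj c hc σ, hσ ▸ hmap σ hc.2⟩) hint
    (fun c hc σ => ?_) hG hdeg (hab ▸ hGle) fun n =>
      ⟨orbitPoly d (algebraMap A Ω a) (n + 1), monic_orbitPoly hd _ n, ?_, fun c hc σ => ?_⟩
  · rw [sub_neg_eq_add, add_comm]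
    exact ((hconj c hc σ).valuation_iterate_eq v hd ha (hconj c hc σ) 1).le
  · rw [natDegree_orbitPoly hd]
    exact Nat.lt_pow_self hd
  · rw [eval_orbitPoly]
    exact ((hconj c hc σ).valuation_iterate_eq v hd ha (hconj c hc σ) (n + 1)).le

lemma isSmall_pow_sub_pow_of_isFractionRing (k F : Type*) [Field k]
    [Algebra k Ω] [v.IsTrivialOn k] [Field F] [Algebra F Ω] [Algebra A F] [IsFractionRing A F]
    [IsScalarTower A F Ω] [Normal F Ω] [IsAlgClosed Ω] [ExpChar Ω p] (he : 2 ≤ e)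
    (hζ : IsPrimitiveRoot ζ e)
    (hv : ∀ x : A, x ≠ 0 → 1 ≤ v (algebraMap A Ω x)) (ha : 1 < v (algebraMap A Ω a))
    (hinf : (commonParams (p ^ l * e) (algebraMap A Ω a) b).Infinite) :
    IsSmall v (p ^ l * e) (algebraMap A Ω a ^ (p ^ l * e) - b ^ (p ^ l * e)) := by
  have hd : 2 ≤ p ^ l * e := by nlinarith [expChar_pow_pos Ω p l]
  have hpow : ∀ {s : Ω}, s ^ e = 1 → s ^ (p ^ l * e) = 1 := fun hs => by
    rw [mul_comm, pow_mul, hs, one_pow]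
  obtain ⟨c, hca, hcb⟩ := hinf.nonempty
  have hab : v b = v (algebraMap A Ω a) := hca.valuation_iterate_eq v hd ha hcb 0
  refine (isSmall_pow_sub_pow_or_exists_root k he hζ (hab ▸ ha)).resolve_right ?_
  rintro ⟨t, ht, hmiss⟩
  exact hinf <| finite_commonParams_of_forall_valuation_eq F hv hd ha
    (hpow hζ.pow_eq_one) (hζ.ne_one he) (hpow ((mem_nthRootsFinset (by lia) 1).1 ht)) hmiss

end CommonParametersFinite

section Transcendental

variable {k K Γ₀ : Type*} [Field k] [Field K] [Algebra k K] [LinearOrderedCommGroupWithZero Γ₀]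
  {v : Valuation K Γ₀} {d e l p : ℕ} {a b ζ : K}

lemma commonParams_coe_algebraicClosure (hd : 2 ≤ d) (x y : algebraicClosure k K) :
    commonParams d (x : K) (y : K) = (↑) '' commonParams d x y := by
  have hmap : ∀ {c z : algebraicClosure k K}, Preperiodic (unicritical d (c : K)) (z : K) ↔
      Preperiodic (unicritical d c) z :=
    preperiodic_unicritical_map_iff (φ := algebraMap (algebraicClosure k K) K) Subtype.val_injective
  refine Set.Subset.antisymm (fun c hc => ?_) ?_
  · have hcint : IsIntegral k c :=
      hc.1.isIntegral_param hd (mem_algebraicClosure_iff'.1 x.2)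
    exact ⟨⟨c, mem_algebraicClosure_iff'.2 hcint⟩, ⟨hmap.1 hc.1, hmap.1 hc.2⟩, rfl⟩
  · rintro _ ⟨c, hc, rfl⟩
    exact ⟨hmap.2 hc.1, hmap.2 hc.2⟩

lemma isIntegrallyClosed_adjoin_singleton (ha : Transcendental k a) :
    IsIntegrallyClosed (Algebra.adjoin k {a}) :=
  .of_equiv (algEquivOfTranscendental k a ha).toRingEquiv

lemma one_le_valuation_of_mem_adjoin_singleton [v.IsTrivialOn k] (ha : 1 < v a) {x : K}
    (hx : x ∈ Algebra.adjoin k {a}) (hx0 : x ≠ 0) : 1 ≤ v x := by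
  rw [Algebra.adjoin_singleton_eq_range_aeval] at hx
  obtain ⟨P, rfl⟩ := hx
  have hP : P ≠ 0 := by
    rintro rfl
    exact hx0 (map_zero _)
  exact (one_le_pow₀ ha.le).trans_eq
    (valuation_aeval_eq_valuation_X_pow_natDegree_of_one_lt_valuation_X a ha hP).symm

variable (k) in
open scoped IntermediateField IntermediateField.algebraAdjoinAdjoin in
theorem isSmall_pow_sub_pow_of_infinite_commonParams [v.IsTrivialOn k] [IsAlgClosed K] [ExpChar K p]
    (he : 2 ≤ e) (hζ : IsPrimitiveRoot ζ e) (ha : 1 < v a)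
    (hinf : (commonParams (p ^ l * e) a b).Infinite) :
    IsSmall v (p ^ l * e) (a ^ (p ^ l * e) - b ^ (p ^ l * e)) := by
  have hd : 2 ≤ p ^ l * e := by nlinarith [expChar_pow_pos K p l]
  have hatr : Transcendental k a := v.transcendental_of_ne_one k a
    (v.ne_zero_iff.1 (zero_lt_one.trans ha).ne') ha.ne'
  have : IsIntegrallyClosed (Algebra.adjoin k {a}) := isIntegrallyClosed_adjoin_singleton hatr
  let Ω := algebraicClosure k⟮a⟯ K
  have : IsAlgClosed Ω := IsAlgClosure.isAlgClosed k⟮a⟯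
  let w : Valuation Ω Γ₀ := v.comap (algebraMap Ω K)
  have : w.IsTrivialOn k := ⟨fun x hx => Valuation.IsTrivialOn.eq_one (v := v) x hx⟩
  let a' : Algebra.adjoin k {a} := ⟨a, Algebra.self_mem_adjoin_singleton k a⟩
  have hw : ∀ x : Algebra.adjoin k {a}, x ≠ 0 → 1 ≤ w (algebraMap _ Ω x) := fun x hx =>
    one_le_valuation_of_mem_adjoin_singleton (k := k) ha x.2 fun h => hx (Subtype.ext h)
  obtain ⟨c, hca, hcb⟩ := hinf.nonempty
  have hmem : ∀ {z : K}, IsIntegral k⟮a⟯ z → z ∈ Ω := mem_algebraicClosure_iff'.2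
  have hcint : IsIntegral k⟮a⟯ c :=
    hca.isIntegral_param hd (isIntegral_algebraMap (x := IntermediateField.AdjoinSimple.gen k a))
  lift b to Ω using hmem (hcb.isIntegral hd hcint)
  lift ζ to Ω using hmem ((hζ.isIntegral (by lia)).tower_top)
  have hinf' : (commonParams (p ^ l * e) (algebraMap _ Ω a') b).Infinite := by
    refine .of_image (Subtype.val : Ω → K) ?_
    rw [← commonParams_coe_algebraicClosure hd]
    exact hinf
  exact isSmall_pow_sub_pow_of_isFractionRing (v := w) k k⟮a⟯ he
    (IsPrimitiveRoot.coe_submonoidClass_iff.1 hζ) hw ha hinf'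

end Transcendental

section Quadratic

variable {k K : Type*} [Field k] [Field K] [Algebra k K] {a b c x y z : K}

variable (k) in
/-- `z` has the same absolute value as `a` at every place of `K` over `k` where `a` has a pole. -/
def SamePoles (a z : K) : Prop :=
  ∀ V : ValuationSubring K, V.valuation.IsTrivialOn k → 1 < V.valuation a →
    V.valuation z = V.valuation a

lemma SamePoles.mul (hz : SamePoles k a z) (hy : IsAlgebraic k y) (hy0 : y ≠ 0) :
    SamePoles k a (z * y) := fun V hVk ha => by
  rw [map_mul, hz V hVk ha, valuation_eq_one_of_isAlgebraic _ hy hy0, mul_one]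

lemma SamePoles.transcendental (hz : SamePoles k a z) (ha : Transcendental k a) :
    Transcendental k z := fun halg => ha <| isAlgebraic_of_forall_valuation_le_one fun V hVk => by
  by_contra! hV
  have hle := hz V hVk hV
  have hz0 : z ≠ 0 := V.valuation.ne_zero_iff.1 (hle ▸ (zero_lt_one.trans hV).ne')
  exact hV.ne' (hle ▸ valuation_eq_one_of_isAlgebraic _ halg hz0)

lemma SamePoles.isAlgebraic_add (h : SamePoles k a (x - y))
    (ha : Preperiodic (unicritical 2 c) a) (hx : Preperiodic (unicritical 2 c) x)
    (hy : Preperiodic (unicritical 2 c) y) : IsAlgebraic k (x + y) :=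
  isAlgebraic_of_forall_valuation_le_one fun V hVk => by
    rcases le_or_gt (V.valuation a) 1 with hV | hV
    · exact V.valuation.map_add_le (ha.valuation_iterate_le_one _ le_rfl hV hx 0)
        (ha.valuation_iterate_le_one _ le_rfl hV hy 0)
    · have hle := ha.valuation_pow_sub_pow_le V.valuation le_rfl hV hx hy
      rwa [sq_sub_sq, map_mul, h V hVk hV, mul_le_iff_le_one_left (zero_lt_one.trans hV)] at hle

/- Eliminate `c` between the two instances of
`2 * (f x + f y) = (x + y) ^ 2 + (x - y) ^ 2 + 4 * c` at `(x, y)` and at `(f x, f y)`. -/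
lemma add_sq_sub_one_mul_sub_sq {R : Type*} [CommRing R] (c x y : R) :
    ((x + y) ^ 2 - 1) * (x - y) ^ 2 =
      2 * ((unicritical 2 c)^[2] x + (unicritical 2 c)^[2] y)
        - (unicritical 2 c x + unicritical 2 c y) ^ 2
        - 2 * (unicritical 2 c x + unicritical 2 c y) + (x + y) ^ 2 := by
  simp only [unicritical, Function.iterate_succ, Function.iterate_zero, Function.comp_apply, id_eq]
  ring

lemma SamePoles.add_mem_or_add_eq_zero (h : SamePoles k a (x - y)) (hatr : Transcendental k a)
    (ha : Preperiodic (unicritical 2 c) a) (hx : Preperiodic (unicritical 2 c) x)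
    (hy : Preperiodic (unicritical 2 c) y) :
    x + y ∈ ({0, 1, -1} : Set K) ∨ unicritical 2 c x + unicritical 2 c y = 0 := by
  have hstep : ∀ z w : K, unicritical 2 c z - unicritical 2 c w = (z - w) * (z + w) := fun z w => by
    rw [unicritical_sub_unicritical, sq_sub_sq, mul_comm]
  have halg₀ := h.isAlgebraic_add ha hx hy
  by_cases h₀ : x + y = 0
  · exact .inl (.inl h₀)
  have h' : SamePoles k a (unicritical 2 c x - unicritical 2 c y) :=
    hstep x y ▸ h.mul halg₀ h₀
  have halg₁ := h'.isAlgebraic_add ha (hx.iterate 1) (hy.iterate 1)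
  by_cases h₁ : unicritical 2 c x + unicritical 2 c y = 0
  · exact .inr h₁
  have h'' : SamePoles k a ((unicritical 2 c)^[2] x - (unicritical 2 c)^[2] y) :=
    hstep (unicritical 2 c x) (unicritical 2 c y) ▸ h'.mul halg₁ h₁
  have halg₂ := h''.isAlgebraic_add ha (hx.iterate 2) (hy.iterate 2)
  have halg : IsAlgebraic k (((x + y) ^ 2 - 1) * (x - y) ^ 2) := by
    have htwo : IsAlgebraic k (2 : K) := isAlgebraic_natCast 2
    rw [add_sq_sub_one_mul_sub_sq c]
    exact (((htwo.mul halg₂).sub (halg₁.pow 2)).sub (htwo.mul halg₁)).add (halg₀.pow 2)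
  refine .inl (.inr (sq_eq_one_iff.1 (by_contra fun hne => ?_)))
  exact h.transcendental hatr <| .of_pow two_pos <|
    .of_mul (mem_nonZeroDivisors_of_ne_zero (sub_ne_zero.2 hne))
      ((halg₀.pow 2).sub isAlgebraic_one) halg

lemma finite_iterate_add_iterate_eq {d : ℕ} (hd : 2 ≤ d) (h2 : (2 : K) ≠ 0) (a b s : K)
    (n : ℕ) : {c | (unicritical d c)^[n + 1] a + (unicritical d c)^[n + 1] b = s}.Finite := by
  let P : K[X] := orbitPoly d a (n + 1) + orbitPoly d b (n + 1) - C s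
  have hlead : ∀ x : K, (orbitPoly d x (n + 1)).coeff (d ^ n) = 1 := fun x => by
    rw [← natDegree_orbitPoly hd x n]
    exact monic_orbitPoly hd x n
  have hcoeff : P.coeff (d ^ n) = 2 := by
    rw [coeff_sub, coeff_add, hlead, hlead, coeff_C_of_ne_zero (pow_ne_zero n (by lia)),
      sub_zero, one_add_one_eq_two]
  have hP : P ≠ 0 := fun h => h2 (by rw [← hcoeff, h, coeff_zero])
  refine (P.rootSet_finite K).subset fun c hc => mem_rootSet.2 ⟨hP, ?_⟩
  rw [Set.mem_ofPred_eq] at hc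
  simp only [P, coe_aeval_eq_eval, eval_sub, eval_add, eval_orbitPoly, eval_C, hc, sub_self]

lemma samePoles_iterate_two_sub (h2 : (2 : K) ≠ 0) (halg : IsAlgebraic k (a ^ 2 - b ^ 2))
    (hne : a ^ 2 ≠ b ^ 2) (ha : Preperiodic (unicritical 2 c) a) :
    SamePoles k a ((unicritical 2 c)^[2] a - (unicritical 2 c)^[2] b) := fun V _ hV => by
  have hone : ∀ {z : K}, IsAlgebraic k z → z ≠ 0 → V.valuation z = 1 :=
    valuation_eq_one_of_isAlgebraic V.valuation
  have htwo : IsAlgebraic k (2 : K) := isAlgebraic_natCast 2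
  have hdiff : V.valuation (a ^ 2 - b ^ 2) = 1 := hone halg (sub_ne_zero.2 hne)
  have htwice : V.valuation (2 * unicritical 2 c a) = V.valuation a := by
    rw [map_mul, hone htwo h2, one_mul]
    exact ha.valuation_iterate_eq _ le_rfl hV ha 1
  have hfactor : (unicritical 2 c)^[2] a - (unicritical 2 c)^[2] b =
      (2 * unicritical 2 c a - (a ^ 2 - b ^ 2)) * (a ^ 2 - b ^ 2) := by
    simp only [unicritical, Function.iterate_succ, Function.iterate_zero, Function.comp_apply,
      id_eq]
    ring
  rw [hfactor, map_mul, hdiff, mul_one,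
    V.valuation.map_sub_eq_of_lt_left (by rwa [hdiff, htwice]), htwice]

theorem sq_eq_sq_of_infinite_commonParams (h2 : (2 : K) ≠ 0) (ha : Transcendental k a)
    (halg : IsAlgebraic k (a ^ 2 - b ^ 2)) (hinf : (commonParams 2 a b).Infinite) :
    a ^ 2 = b ^ 2 := by
  by_contra hne
  refine hinf (((Set.Finite.biUnion (Set.toFinite ({0, 1, -1} : Set K)) fun s _ =>
    finite_iterate_add_iterate_eq le_rfl h2 a b s 1).union
    (finite_iterate_add_iterate_eq le_rfl h2 a b 0 2)).subset fun c hc => ?_)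
  rcases (samePoles_iterate_two_sub h2 halg hne hc.1).add_mem_or_add_eq_zero ha hc.1
    (hc.1.iterate 2) (hc.2.iterate 2) with h | h
  · exact .inl (Set.mem_biUnion h rfl)
  · exact .inr h

end Quadratic

section Transcendental

variable {k K : Type*} [Field k] [Field K] [Algebra k K] [IsAlgClosed K] {p l e : ℕ} {a b : K}

theorem pow_eq_pow_of_infinite_commonParams [ExpChar K p] (he : 2 ≤ e) (he0 : (e : K) ≠ 0)
    (ha : Transcendental k a) (hinf : (commonParams (p ^ l * e) a b).Infinite) :
    a ^ (p ^ l * e) = b ^ (p ^ l * e) := by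
  have hd : 2 ≤ p ^ l * e := by nlinarith [expChar_pow_pos K p l]
  have : NeZero (e : K) := ⟨he0⟩
  obtain ⟨ζ, hζ⟩ := HasEnoughRootsOfUnity.exists_primitiveRoot K e
  have hsmall : ∀ V : ValuationSubring K, V.valuation.IsTrivialOn k → 1 < V.valuation a →
      IsSmall V.valuation (p ^ l * e) (a ^ (p ^ l * e) - b ^ (p ^ l * e)) := fun V _ hV =>
    isSmall_pow_sub_pow_of_infinite_commonParams k he hζ hV hinf
  have halg : IsAlgebraic k (a ^ (p ^ l * e) - b ^ (p ^ l * e)) := by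
    obtain ⟨c, hca, hcb⟩ := hinf.nonempty
    refine isAlgebraic_of_forall_valuation_le_one fun V hVk => ?_
    rcases le_or_gt (V.valuation a) 1 with hV | hV
    · rw [← unicritical_sub_unicritical _ c]
      exact V.valuation.map_sub_le (hca.valuation_iterate_le_one _ hd hV hca 1)
        (hca.valuation_iterate_le_one _ hd hV hcb 1)
    · exact (hsmall V hVk hV).1
  obtain hd3 | hd2 := hd.lt_or_eq
  · by_contra hne
    refine ha (isAlgebraic_of_forall_valuation_le_one fun V hVk => ?_)
    by_contra! hV
    exact ((hsmall V hVk hV).2 hd3).ne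
      (valuation_eq_one_of_isAlgebraic _ halg (sub_ne_zero.2 hne))
  · have h2 : (2 : K) ≠ 0 := by
      have he2 : e = 2 := by nlinarith [expChar_pow_pos K p l]
      exact_mod_cast he2 ▸ he0
    rw [← hd2] at hinf halg ⊢
    exact sq_eq_sq_of_infinite_commonParams h2 ha halg hinf

end Transcendental

section AlgebraicParameters

variable {k K : Type*} [Field k] [Field K] [Algebra k K] {d : ℕ} {c x : K}

lemma preperiodic_unicritical_of_isAlgebraic [Finite k] (hc : IsAlgebraic k c)
    (hx : IsAlgebraic k x) : Preperiodic (unicritical d c) x := by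
  let E := IntermediateField.adjoin k {c, x}
  have : FiniteDimensional k E := IntermediateField.finiteDimensional_adjoin <| by
    rintro _ (rfl | rfl)
    exacts [hc.isIntegral, hx.isIntegral]
  have : Finite E := Module.finite_of_finite k
  have hcE : c ∈ E := IntermediateField.subset_adjoin k _ (by simp)
  have hxE : x ∈ E := IntermediateField.subset_adjoin k _ (by simp)
  exact preperiodic_of_mapsTo (Set.toFinite (E : Set K))
    (fun y hy => add_mem (pow_mem hy d) hcE) hxE

lemma infinite_setOf_isAlgebraic (k K : Type*) [Field k] [Field K] [Algebra k K] [IsAlgClosed K] :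
    {z : K | IsAlgebraic k z}.Infinite := by
  have : IsAlgClosed (algebraicClosure k K) := IsAlgClosure.isAlgClosed k
  exact Set.infinite_of_injective_forall_mem Subtype.val_injective
    fun z : algebraicClosure k K => mem_algebraicClosure_iff.1 z.2

end AlgebraicParameters

section PeriodicParameters

variable {k K : Type*} [Field k] [Field K] [Algebra k K] {d : ℕ} {a : K}

lemma exists_ne_isRoot_of_not_isRoot_derivative {P : K[X]} (hsplits : P.Splits)
    (hdeg : 2 ≤ P.natDegree) {t : K} (ht : ¬ (derivative P).IsRoot t) : ∃ s ≠ t, P.IsRoot s := by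
  classical
  by_contra! h
  have hroots : P.roots = Multiset.replicate P.natDegree t :=
    Multiset.eq_replicate.2 ⟨hsplits.natDegree_eq_card_roots.symm,
      fun s hs => by_contra fun hst => h s hst (isRoot_of_mem_roots hs)⟩
  have hmult : 1 < P.rootMultiplicity t := by
    rw [← count_roots, hroots, Multiset.count_replicate_self]
    exact hdeg
  have hP : P ≠ 0 := ne_zero_of_natDegree_gt hdeg
  exact ht ((one_lt_rootMultiplicity_iff_isRoot hP).1 hmult).2

lemma isFixedPt_unicritical_iff {R : Type*} [CommRing R] {a c : R} :
    Function.IsFixedPt (unicritical d c) a ↔ c = a - a ^ d := by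
  rw [Function.IsFixedPt, unicritical, eq_sub_iff_add_eq']

lemma eval_derivative_orbitPoly {R : Type*} [CommRing R] (d : ℕ) (a : R) (n : ℕ) :
    (derivative (orbitPoly d a n)).eval (a - a ^ d) =
      ∑ i ∈ Finset.range n, ((d : R) * a ^ (d - 1)) ^ i := by
  have hfix : Function.IsFixedPt (unicritical d (a - a ^ d)) a := isFixedPt_unicritical_iff.2 rfl
  induction n with
  | zero => simp [orbitPoly]
  | succ n ih =>
    rw [orbitPoly_succ, derivative_add, derivative_pow, derivative_X, geom_sum_succ, ← ih]
    simp only [eval_add, eval_mul, eval_pow, eval_one, eval_C, eval_orbitPoly, (hfix.iterate n).eq]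

lemma eval_derivative_orbitPoly_ne_zero (hd : 2 ≤ d) (ha : Transcendental k a) {n : ℕ}
    (hn : n ≠ 0) : (derivative (orbitPoly d a n)).eval (a - a ^ d) ≠ 0 := by
  intro h
  have hpow : ((d : K) * a ^ (d - 1)) ^ n = 1 := by
    rw [← sub_eq_zero, ← geom_sum_mul, ← eval_derivative_orbitPoly, h, zero_mul]
  have hd0 : (d : K) ≠ 0 := fun h0 => by
    rw [h0, zero_mul, zero_pow hn] at hpow
    exact zero_ne_one hpow
  have hmul : IsAlgebraic k ((d : K) * a ^ (d - 1)) :=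
    IsAlgebraic.of_pow (Nat.pos_of_ne_zero hn) (hpow ▸ isAlgebraic_one)
  have hpred : IsAlgebraic k (a ^ (d - 1)) := by
    rw [← inv_mul_cancel_left₀ hd0 (a ^ (d - 1))]
    exact (isAlgebraic_natCast d).inv.mul hmul
  exact ha (hpred.of_pow (by lia))

lemma exists_minimalPeriod_eq_prime [IsAlgClosed K] (hd : 2 ≤ d) (ha : Transcendental k a) {n : ℕ}
    (hn : n.Prime) : ∃ c, Function.minimalPeriod (unicritical d c) a = n := by
  obtain ⟨m, rfl⟩ := Nat.exists_eq_add_one_of_ne_zero hn.ne_zero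
  have hdeg : 2 ≤ (orbitPoly d a (m + 1) - C a).natDegree := by
    rw [natDegree_sub_C, natDegree_orbitPoly hd]
    exact hd.trans (Nat.le_self_pow (by have := hn.two_le; lia) d)
  have hsimple : ¬ (derivative (orbitPoly d a (m + 1) - C a)).IsRoot (a - a ^ d) := by
    rw [derivative_sub, derivative_C, sub_zero]
    exact eval_derivative_orbitPoly_ne_zero hd ha hn.ne_zero
  obtain ⟨c, hc, hroot⟩ :=
    exists_ne_isRoot_of_not_isRoot_derivative (IsAlgClosed.splits _) hdeg hsimple
  have hperiodic : Function.IsPeriodicPt (unicritical d c) (m + 1) a := by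
    rwa [IsRoot, eval_sub, eval_C, eval_orbitPoly, sub_eq_zero] at hroot
  have : Fact (m + 1).Prime := ⟨hn⟩
  exact ⟨c, Function.minimalPeriod_eq_prime hperiodic (isFixedPt_unicritical_iff.not.2 hc)⟩

variable (k) in
lemma infinite_setOf_preperiodic [Finite k] [IsAlgClosed K] (hd : 2 ≤ d) (a : K) :
    {c | Preperiodic (unicritical d c) a}.Infinite := by
  by_cases ha : IsAlgebraic k a
  · exact (infinite_setOf_isAlgebraic k K).mono fun c hc =>
      preperiodic_unicritical_of_isAlgebraic hc ha
  · choose c hc using fun n : Nat.Primes => exists_minimalPeriod_eq_prime hd ha n.2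
    refine Set.infinite_of_injective_forall_mem (f := c) (fun m n hmn => Subtype.ext ?_) fun n =>
      ⟨0, n, n.2.pos, ?_⟩
    · rw [← hc m, ← hc n, hmn]
    · have h := Function.iterate_minimalPeriod (f := unicritical d (c n)) (x := a)
      rw [hc n] at h
      exact h.symm

end PeriodicParameters

section FrobeniusDegree

variable {R : Type*} [CommRing R] {p l : ℕ} [ExpChar R p] {a b c : R}

lemma iterate_unicritical_expChar_pow_sub (p l : ℕ) [ExpChar R p] (c a b : R) (n : ℕ) :
    (unicritical (p ^ l) c)^[n] a - (unicritical (p ^ l) c)^[n] b =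
      (unicritical (p ^ l) 0)^[n] (a - b) := by
  induction n with
  | zero => rfl
  | succ n ih =>
    simp only [Function.iterate_succ_apply', unicritical_sub_unicritical, ← ih]
    rw [unicritical, add_zero, sub_pow_expChar_pow]

lemma Preperiodic.sub_expChar_pow (ha : Preperiodic (unicritical (p ^ l) c) a)
    (hb : Preperiodic (unicritical (p ^ l) c) b) :
    Preperiodic (unicritical (p ^ l) 0) (a - b) := by
  rw [preperiodic_iff_finite_range_iterate] at ha hb ⊢
  refine (ha.sub hb).subset ?_
  rintro _ ⟨n, rfl⟩
  simp only [← iterate_unicritical_expChar_pow_sub p l c]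
  exact Set.sub_mem_sub ⟨n, rfl⟩ ⟨n, rfl⟩

lemma Preperiodic.of_sub_expChar_pow (ha : Preperiodic (unicritical (p ^ l) c) a)
    (hab : Preperiodic (unicritical (p ^ l) 0) (b - a)) :
    Preperiodic (unicritical (p ^ l) c) b := by
  rw [preperiodic_iff_finite_range_iterate] at ha hab ⊢
  refine (hab.add ha).subset ?_
  rintro _ ⟨n, rfl⟩
  refine ⟨_, ⟨n, rfl⟩, _, ⟨n, rfl⟩, ?_⟩
  simp only [← iterate_unicritical_expChar_pow_sub p l c, sub_add_cancel]

end FrobeniusDegree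

section CommonParametersInfinite

variable {k K : Type*} [Field k] [Field K] [Algebra k K] {p d : ℕ} {a b : K}

lemma infinite_commonParams_of_isAlgebraic [Finite k] [IsAlgClosed K] (ha : IsAlgebraic k a)
    (hb : IsAlgebraic k b) : (commonParams d a b).Infinite :=
  (infinite_setOf_isAlgebraic k K).mono fun _ hc =>
    ⟨preperiodic_unicritical_of_isAlgebraic hc ha, preperiodic_unicritical_of_isAlgebraic hc hb⟩

lemma infinite_commonParams_of_isAlgebraic_sub [Finite k] [IsAlgClosed K] [ExpChar K p] {l : ℕ}
    (hd : 2 ≤ p ^ l) (h : IsAlgebraic k (b - a)) : (commonParams (p ^ l) a b).Infinite :=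
  (infinite_setOf_preperiodic k hd a).mono fun _ ha =>
    ⟨ha, .of_sub_expChar_pow ha (preperiodic_unicritical_of_isAlgebraic isAlgebraic_zero h)⟩

variable (k) in
lemma infinite_commonParams_of_pow_eq_pow [Finite k] [IsAlgClosed K] (hd : 2 ≤ d)
    (h : a ^ d = b ^ d) : (commonParams d a b).Infinite :=
  (infinite_setOf_preperiodic k hd a).mono fun c ha => by
    refine ⟨ha, preperiodic_apply_iff.1 ?_⟩
    rwa [unicritical, ← h, ← unicritical, preperiodic_apply_iff]

variable (k) in
lemma isAlgebraic_sub_of_nonempty_commonParams [ExpChar K p] {l : ℕ} (hd : 2 ≤ p ^ l)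
    (h : (commonParams (p ^ l) a b).Nonempty) : IsAlgebraic k (b - a) := by
  obtain ⟨c, ha, hb⟩ := h
  exact ((hb.sub_expChar_pow ha).isIntegral hd isIntegral_zero).isAlgebraic

lemma isAlgebraic_sub_or_pow_eq_pow_of_infinite_commonParams [IsAlgClosed K] [Fact p.Prime]
    [CharP K p] (hd : 2 ≤ d) (ha : Transcendental k a) (hinf : (commonParams d a b).Infinite) :
    (∃ l, 0 < l ∧ d = p ^ l ∧ IsAlgebraic k (b - a)) ∨ a ^ d = b ^ d := by
  obtain ⟨l, e, hpe, rfl⟩ :=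
    Nat.exists_eq_pow_mul_and_not_dvd (n := d) (by lia) p (Fact.out : p.Prime).ne_one
  have he0 : (e : K) ≠ 0 := fun h => hpe ((CharP.cast_eq_zero_iff K p e).1 h)
  obtain rfl | he : e = 1 ∨ 2 ≤ e := by
    have : e ≠ 0 := fun h => hpe (h ▸ dvd_zero p)
    lia
  · rw [mul_one] at hd hinf ⊢
    exact .inl ⟨l, Nat.pos_of_ne_zero fun h => by simp [h] at hd, rfl,
      isAlgebraic_sub_of_nonempty_commonParams k hd hinf.nonempty⟩
  · exact .inr (pow_eq_pow_of_infinite_commonParams he he0 ha hinf)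

end CommonParametersInfinite

theorem simultaneously_preperiodic_char_p_general {p : ℕ} [Fact p.Prime] {k K : Type*} [Field k]
    [Finite k] [Field K] [IsAlgClosed K] [CharP K p] [Algebra k K] {d : ℕ} (hd : 2 ≤ d) (a b : K) :
    (commonParams d a b).Infinite ↔ (IsAlgebraic k a ∧ IsAlgebraic k b) ∨
      (∃ l, 0 < l ∧ d = p ^ l ∧ IsAlgebraic k (b - a)) ∨ a ^ d = b ^ d := by
  constructor
  · intro hinf
    by_cases ha : IsAlgebraic k a
    · refine or_iff_not_imp_left.2 fun hb => ?_
      rw [commonParams_comm] at hinf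
      have hb' : Transcendental k b := fun h => hb ⟨ha, h⟩
      exact (isAlgebraic_sub_or_pow_eq_pow_of_infinite_commonParams hd hb' hinf).imp
        (fun ⟨l, hl, hdl, h⟩ => ⟨l, hl, hdl, neg_sub a b ▸ h.neg⟩) Eq.symm
    · exact .inr (isAlgebraic_sub_or_pow_eq_pow_of_infinite_commonParams hd ha hinf)
  · rintro (⟨ha, hb⟩ | ⟨l, -, rfl, hab⟩ | hab)
    · exact infinite_commonParams_of_isAlgebraic ha hb
    · exact infinite_commonParams_of_isAlgebraic_sub hd hab
    · exact infinite_commonParams_of_pow_eq_pow k hd hab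

/-- For `f_λ(x) = x^d + λ` over an algebraic closure of a field `L` of
characteristic `p`, the set of parameters `λ` for which both starting points `α, β ∈ L`
are preperiodic is infinite iff (1) both `α` and `β` are algebraic over `𝔽_p`, or
(2) `d` is a positive power of `p` and `β - α` is algebraic over `𝔽_p`, or (3) `α^d = β^d`. -/
theorem simultaneously_preperiodic_char_p
    (p : ℕ) [Fact p.Prime] (L : Type*) [Field L] [CharP L p] [Algebra (ZMod p) L]
    (α β : L) (d : ℕ) (hd : 2 ≤ d) :
    {lam : AlgebraicClosure L |
        (∃ m n : ℕ, m < n ∧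
          (fun x : AlgebraicClosure L => x ^ d + lam)^[m] (algebraMap L (AlgebraicClosure L) α)
            = (fun x : AlgebraicClosure L => x ^ d + lam)^[n]
                (algebraMap L (AlgebraicClosure L) α)) ∧
        (∃ m n : ℕ, m < n ∧
          (fun x : AlgebraicClosure L => x ^ d + lam)^[m] (algebraMap L (AlgebraicClosure L) β)
            = (fun x : AlgebraicClosure L => x ^ d + lam)^[n]
                (algebraMap L (AlgebraicClosure L) β))}.Infinite
      ↔ ((IsAlgebraic (ZMod p) α ∧ IsAlgebraic (ZMod p) β) ∨
          (∃ ℓ : ℕ, 0 < ℓ ∧ d = p ^ ℓ ∧ IsAlgebraic (ZMod p) (β - α)) ∨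
          α ^ d = β ^ d) := by
  have hinj := (algebraMap L (AlgebraicClosure L)).injective
  have : CharP (AlgebraicClosure L) p := charP_of_injective_algebraMap hinj p
  rw [← isAlgebraic_algebraMap_iff hinj, ← isAlgebraic_algebraMap_iff hinj,
    ← isAlgebraic_algebraMap_iff hinj, ← hinj.eq_iff, map_sub, map_pow, map_pow]
  exact simultaneously_preperiodic_char_p_general hd _ _
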